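/- Let R be a discrete valuation ring with maximal ideal m and fraction field K, and let A be a finite flat R-algebra whose generic fiber A^K = K ⊗_R A is a split K-algebra. Then A is semiperfect; in particular, the quotient map A → A/mA is idempotent surjective, induces a bijection between the isomorphism classes of primitive idempotents of A and of A/mA, and is block bijective. -/

import Mathlib

open TensorProduct

section Defs
variable {B : Type*} [Ring B] {C : Type*} [Ring C]

/-- `e` is a centrally-primitive ("block") idempotent of the ring `B`. -/
def IsBlockIdem (e : B) : Prop :=
  IsIdempotentElem e ∧ e ≠ 0 ∧ (∀ x : B, e * x = x * e) ∧
    ∀ f g : B, (∀ x : B, f * x = x * f) → (∀ x : B, g * x = x * g) →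
      IsIdempotentElem f → IsIdempotentElem g → f * g = 0 → f + g = e → f = 0 ∨ g = 0

/-- `e` is a primitive idempotent of `B`. -/
def IsPrimIdem (e : B) : Prop :=
  IsIdempotentElem e ∧ e ≠ 0 ∧
    ∀ f g : B, IsIdempotentElem f → IsIdempotentElem g →
      f * g = 0 → g * f = 0 → f + g = e → f = 0 ∨ g = 0

/-- Two idempotents `e, f` are isomorphic (`Be ≅ Bf` as left modules). -/
def IdemIso (e f : B) : Prop :=
  ∃ a b : B, a * b = e ∧ b * a = f ∧ a = e * a * f ∧ b = f * b * e

/-- A map of rings is block bijective if it restricts to a bijection between the sets of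
centrally-primitive idempotents. -/
def BlockBijective (φ : B → C) : Prop :=
  Set.BijOn φ {e | IsBlockIdem e} {e | IsBlockIdem e}

/-- A map of rings induces a bijection between the isomorphism classes of primitive idempotents. -/
def PrimIdemBijective (φ : B → C) : Prop :=
  (∀ e, IsPrimIdem e → IsPrimIdem (φ e)) ∧
  (∀ e f, IsPrimIdem e → IsPrimIdem f → (IdemIso e f ↔ IdemIso (φ e) (φ f))) ∧
  (∀ f', IsPrimIdem f' → ∃ e, IsPrimIdem e ∧ IdemIso (φ e) f')

/-- A ring `B` is semiperfect if `B/Rad(B)` is semisimple and every idempotent of `B/Rad(B)`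
lifts to an idempotent of `B`, where `Rad` denotes the Jacobson radical. -/
def IsSemiperfect (B : Type*) [Ring B] : Prop :=
  IsSemisimpleRing ((⊥ : TwoSidedIdeal B).jacobson.ringCon.Quotient) ∧
  ∀ f : (⊥ : TwoSidedIdeal B).jacobson.ringCon.Quotient, IsIdempotentElem f →
    ∃ e : B, IsIdempotentElem e ∧ RingCon.mk' (⊥ : TwoSidedIdeal B).jacobson.ringCon e = f

end Defs

universe u v

def IsSplitAlgebra (K : Type u) (B : Type v) [Field K] [Ring B] [Algebra K B] : Prop :=
  ∀ (S : Type v) [AddCommGroup S] [Module B S], IsSimpleModule B S →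
    ∀ f : S →ₗ[B] S, ∃ k : K, ∀ s : S, f s = algebraMap K B k • s


section Helpers

/-- idempotents in an ideal inside the radical vanish -/
lemma idem_eq_zero_of_unit {A : Type*} [Ring A] {e : A} (he : IsIdempotentElem e)
    (hu : IsUnit (1 - e)) : e = 0 := by
  have h : (1 - e) * e = 0 := by rw [sub_mul, one_mul, he.eq, sub_self]
  exact (hu.mul_right_eq_zero).1 h

/-- correction of an approximate idempotent by conjugation -/
lemma conj_lift {A C : Type*} [Ring A] [Ring C] (φ : A →+* C) {e a : A} (he : IsIdempotentElem e)
    (ha : IsIdempotentElem (φ a)) (hu : IsUnit (1 + (2 * e - 1) * (a - e))) :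
    ∃ e' : A, IsIdempotentElem e' ∧ φ e' = φ a := by
  obtain ⟨u, hu⟩ := hu
  have he' : e * e = e := he
  have h1 : (u : A) = e * a + (1 - e) * (1 - a) := by
    rw [hu]
    have : 1 + (2 * e - 1) * (a - e) = e * a + (1 - e) * (1 - a) - 2 * (e * e - e) := by noncomm_ring
    rw [this, he']; simp
  have h2 : e * (u : A) = e * a := by
    have : e * (e * a + (1 - e) * (1 - a)) = e * e * a + (e - e * e) * (1 - a) := by noncomm_ring
    rw [h1, this, he']; simp
  have h3 : φ ((u : A) * a) = φ (e * a) := by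
    rw [h1]
    have ha' : φ a * φ a = φ a := ha
    simp only [map_mul, map_add, map_sub, map_one]
    rw [add_mul, mul_assoc, mul_assoc, ha', sub_mul _ _ (φ a), ha']; simp
  refine ⟨(↑u⁻¹ : A) * e * u, ?_, ?_⟩
  · change (↑u⁻¹ : A) * e * u * ((↑u⁻¹ : A) * e * u) = _
    calc (↑u⁻¹ : A) * e * u * ((↑u⁻¹ : A) * e * u) = ↑u⁻¹ * e * (u * ↑u⁻¹) * e * u := by noncomm_ring
      _ = ↑u⁻¹ * (e * e) * u := by rw [Units.mul_inv]; noncomm_ring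
      _ = _ := by rw [he']
  · rw [mul_assoc, h2, map_mul, ← h3, ← map_mul, Units.inv_mul_cancel_left]

variable {A C : Type*} [Ring A] [Ring C] (φ : A →+* C)

lemma prim_bij (hs : Function.Surjective φ) (hk : ∀ x, φ x = 0 → IsUnit (1 + x))
    (hl : ∀ f : C, IsIdempotentElem f → ∃ e, IsIdempotentElem e ∧ φ e = f) :
    PrimIdemBijective φ := by
  have hz : ∀ e, IsIdempotentElem e → φ e = 0 → e = 0 := fun e he h =>
    idem_eq_zero_of_unit he (by simpa [sub_eq_add_neg] using hk (-e) (by simp [h]))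
  -- lifting inside a corner
  have hc : ∀ e : A, IsIdempotentElem e → ∀ f : C, IsIdempotentElem f → f * φ e = f → φ e * f = f →
      ∃ x : A, IsIdempotentElem x ∧ φ x = f ∧ x * e = x ∧ e * x = x := by
    intro e he f hf h1 h2
    obtain ⟨x, hx, rfl⟩ := hl f hf
    have he' : e * e = e := he
    have hx' : x * x = x := hx
    have hxe : φ (x * (1 - e)) = 0 := by simp [mul_sub, h1]
    obtain ⟨u, hu⟩ := hk (-(x * (1 - e))) (by rw [map_neg, hxe, neg_zero])
    have hu1 : φ (u : A) = 1 := by rw [hu, map_add, map_neg, hxe]; simp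
    have hu2 : φ (↑u⁻¹ : A) = 1 := by
      have := congrArg φ (u.inv_mul)
      rwa [map_mul, hu1, mul_one, map_one] at this
    set y : A := ↑u⁻¹ * x * u with hy
    have hyy : y * y = y := by
      calc y * y = ↑u⁻¹ * x * (u * ↑u⁻¹) * x * u := by rw [hy]; noncomm_ring
        _ = ↑u⁻¹ * (x * x) * u := by rw [Units.mul_inv]; noncomm_ring
        _ = _ := by rw [hx']
    have hye : y * e = y := by
      have : x * u * (1 - e) = 0 := by
        have h3 : (1 - e) * (1 - e) = 1 - e := by
          have : (1 - e) * (1 - e) = 1 - e + (e * e - e) := by noncomm_ring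
          rw [this, he']; simp
        rw [hu, mul_add, mul_neg, ← mul_assoc, hx', add_mul, neg_mul, mul_one, mul_assoc x, h3,
          add_neg_cancel]
      have h4 : y * (1 - e) = 0 := by rw [hy, mul_assoc _ x, mul_assoc _ (x * _), this, mul_zero]
      rw [mul_sub, mul_one, sub_eq_zero] at h4
      exact h4.symm
    refine ⟨e * y, ?_, ?_, ?_, ?_⟩
    · change e * y * (e * y) = e * y
      rw [mul_assoc, ← mul_assoc y, hye, hyy]
    · rw [map_mul, hy, map_mul, map_mul, hu1, hu2, one_mul, mul_one, h2]
    · rw [mul_assoc, hye]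
    · rw [← mul_assoc, he']
  refine ⟨?_, ?_, ?_⟩
  · rintro e ⟨he, hne, hp⟩
    refine ⟨he.map φ, fun h => hne (hz e he h), ?_⟩
    intro f g hf hg hfg hgf hadd
    have hf' : f * f = f := hf
    obtain ⟨x, hx, rfl, h1, h2⟩ := hc e he f hf (by rw [← hadd, mul_add, hf', hfg, add_zero])
      (by rw [← hadd, add_mul, hf', hgf, add_zero])
    have hx' : x * x = x := hx
    have he' : e * e = e := he
    have hg2 : g = φ (e - x) := by rw [map_sub, ← hadd]; simp
    rcases hp x (e - x) hx (by
      change (e - x) * (e - x) = e - x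
      simp only [mul_sub, sub_mul, h1, h2, hx', he']; simp)
      (by rw [mul_sub, h1, hx', sub_self]) (by rw [sub_mul, h2, hx', sub_self]) (by simp) with h | h
    · left; rw [h, map_zero]
    · right; rw [hg2, h, map_zero]
  · rintro e f ⟨he, -, -⟩ ⟨hf, -, -⟩
    have he' : e * e = e := he
    have hf' : f * f = f := hf
    constructor
    · rintro ⟨a, b, h1, h2, h3, h4⟩
      refine ⟨φ a, φ b, ?_, ?_, ?_, ?_⟩
      · rw [← map_mul, h1]
      · rw [← map_mul, h2]
      · rw [← map_mul, ← map_mul, ← h3]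
      · rw [← map_mul, ← map_mul, ← h4]
    · rintro ⟨a, b, h1, h2, h3, h4⟩
      obtain ⟨a, rfl⟩ := hs a
      obtain ⟨b, rfl⟩ := hs b
      obtain ⟨a', ha'⟩ : ∃ a', a' = e * a * f := ⟨_, rfl⟩
      obtain ⟨b', hb'⟩ : ∃ b', b' = f * b * e := ⟨_, rfl⟩
      have pa : φ a' = φ a := by rw [ha', map_mul, map_mul, ← h3]
      have pb : φ b' = φ b := by rw [hb', map_mul, map_mul, ← h4]
      have ea : e * a' = a' := by rw [ha', ← mul_assoc, ← mul_assoc, he']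
      have af : a' * f = a' := by rw [ha', mul_assoc, hf']
      have fb : f * b' = b' := by rw [hb', ← mul_assoc, ← mul_assoc, hf']
      have be : b' * e = b' := by rw [hb', mul_assoc, he']
      obtain ⟨u, hu⟩ := hk (a' * b' - e) (by rw [map_sub, map_mul, pa, pb, h1, sub_self])
      have hu1 : φ (u : A) = 1 := by
        rw [hu, map_add, map_sub, map_mul, pa, pb, h1]; simp
      have hu2 : φ (↑u⁻¹ : A) = 1 := by
        have := congrArg φ (u.inv_mul)
        rwa [map_mul, hu1, mul_one, map_one] at this
      have eu : e * u = a' * b' := by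
        rw [hu, mul_add, mul_sub, ← mul_assoc, ea, he']; simp
      have ue : u * e = a' * b' := by
        rw [hu, add_mul, sub_mul, mul_assoc, be, he']; simp
      have eui : e * (↑u⁻¹ : A) = ↑u⁻¹ * e := by
        have : e * (u : A) = u * e := eu.trans ue.symm
        exact ((show Commute e (u : A) from this).units_inv_right).eq
      have k1 : a' * (b' * ↑u⁻¹) = e := by
        rw [← mul_assoc, ← eu, Units.mul_inv_cancel_right]
      obtain ⟨c, hcdef⟩ : ∃ c, c = b' * (↑u⁻¹ : A) := ⟨_, rfl⟩
      rw [← hcdef] at k1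
      have fc : f * c = c := by rw [hcdef, ← mul_assoc, fb]
      have ce : c * e = c := by rw [hcdef, mul_assoc, ← eui, ← mul_assoc, be]
      have pc : φ c = φ b := by rw [hcdef, map_mul, hu2, pb, mul_one]
      have k2 : f - c * a' = 0 := by
        apply hz
        · change (f - c * a') * (f - c * a') = f - c * a'
          have t1 : f * (c * a') = c * a' := by rw [← mul_assoc, fc]
          have t2 : c * a' * f = c * a' := by rw [mul_assoc, af]
          have t3 : c * a' * (c * a') = c * a' := by
            rw [mul_assoc, ← mul_assoc a', k1, ea]
          simp only [mul_sub, sub_mul, t1, t2, t3, hf']; simp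
        · rw [map_sub, map_mul, pc, pa, h2, sub_self]
      exact ⟨a', c, k1, (sub_eq_zero.1 k2).symm, by rw [ea, af], by rw [fc, ce]⟩
  · rintro f ⟨hf, hne, hp⟩
    obtain ⟨e, he, rfl⟩ := hl f hf
    refine ⟨e, ⟨he, fun h => hne (by rw [h, map_zero]), ?_⟩, φ e, φ e, hf, hf, ?_, ?_⟩
    · intro x y hx hy hxy hyx hadd
      rcases hp (φ x) (φ y) (hx.map φ) (hy.map φ) (by rw [← map_mul, hxy, map_zero])
        (by rw [← map_mul, hyx, map_zero]) (by rw [← map_add, hadd]) with h | h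
      · exact Or.inl (hz x hx h)
      · exact Or.inr (hz y hy h)
    · rw [hf.eq, hf.eq]
    · rw [hf.eq, hf.eq]

lemma block_bij (hs : Function.Surjective φ) (hk : ∀ x, φ x = 0 → IsUnit (1 + x))
    (hl : ∀ f : C, IsIdempotentElem f → ∃ e, IsIdempotentElem e ∧ φ e = f)
    (hnak : ∀ e f : A, IsIdempotentElem e → IsIdempotentElem f →
      (∀ x, φ (e * x * f) = 0) → ∀ x, e * x * f = 0) :
    BlockBijective φ := by
  have hz : ∀ e, IsIdempotentElem e → φ e = 0 → e = 0 := fun e he h =>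
    idem_eq_zero_of_unit he (by simpa [sub_eq_add_neg] using hk (-e) (by simp [h]))
  have hcm : ∀ e : A, (∀ x, e * x = x * e) → ∀ x, φ e * x = x * φ e := by
    intro e he x
    obtain ⟨x, rfl⟩ := hs x
    rw [← map_mul, he, map_mul]
  have hcl : ∀ e : A, IsIdempotentElem e → (∀ x, φ e * x = x * φ e) → ∀ x, e * x = x * e := by
    intro e he h x
    have he' : e * e = e := he
    have h1 : e * x * (1 - e) = 0 := by
      refine hnak e (1 - e) he he.one_sub (fun x => ?_) x
      rw [map_mul, map_mul, h, mul_assoc, ← map_mul, mul_sub, he', mul_one, sub_self]; simp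
    have h2 : (1 - e) * x * e = 0 := by
      refine hnak (1 - e) e he.one_sub he (fun x => ?_) x
      rw [map_mul, map_mul, mul_assoc, ← h, ← mul_assoc, ← map_mul, sub_mul, he', one_mul,
        sub_self]; simp
    have h3 : e * x - x * e = e * x * (1 - e) - (1 - e) * x * e := by noncomm_ring
    rw [h1, h2, sub_zero, sub_eq_zero] at h3
    exact h3
  -- uniqueness of central lifts
  have huniq : ∀ e f : A, IsIdempotentElem e → IsIdempotentElem f → (∀ x, e * x = x * e) →
      φ e = φ f → e * (1 - f) = 0 := by
    intro e f he hf hec h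
    apply hz
    · exact IsIdempotentElem.mul_of_commute (hec _) he hf.one_sub
    · rw [map_mul, h, ← map_mul, mul_sub, hf.eq, mul_one, sub_self, map_zero]
  refine ⟨?_, ?_, ?_⟩
  · rintro e ⟨he, hne, hec, hp⟩
    refine ⟨he.map φ, fun h => hne (hz e he h), hcm e hec, ?_⟩
    intro f g hfc hgc hf hg hfg hadd
    obtain ⟨x, hx, rfl⟩ := hl f hf
    have hxc := hcl x hx hfc
    have hx' : x * x = x := hx
    have he' : e * e = e := he
    have hf' : φ x * φ x = φ x := hf
    -- x * e is a central idempotent lifting f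
    have hxe : φ (e * x) = φ x := by
      rw [map_mul, ← hadd, add_mul, hf', hgc, hfg, add_zero]
    have hi : IsIdempotentElem (e * x) := IsIdempotentElem.mul_of_commute (hec _) he hx
    have hi' : IsIdempotentElem (e * (1 - x)) :=
      IsIdempotentElem.mul_of_commute (hec _) he hx.one_sub
    rcases hp (e * x) (e * (1 - x))
      (fun y => by rw [mul_assoc, hxc, ← mul_assoc, hec, mul_assoc])
      (fun y => by
        have : (1 - x) * y = y * (1 - x) := by rw [sub_mul, mul_sub, hxc]; simp
        rw [mul_assoc, this, ← mul_assoc, hec, mul_assoc])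
      hi hi' (by
        rw [hec x, mul_assoc, ← mul_assoc e, he', ← mul_assoc, ← hec x, mul_assoc, mul_sub, hx']
        simp) (by rw [← mul_add]; simp) with h | h
    · left; rw [← hxe, h, map_zero]
    · right
      have : g = φ (e * (1 - x)) := by
        rw [mul_sub, mul_one, map_sub, hxe, ← hadd]; simp
      rw [this, h, map_zero]
  · rintro e ⟨he, -, hec, -⟩ f ⟨hf, -, hfc, -⟩ h
    have h1 := huniq e f he hf hec h
    have h2 := huniq f e hf he hfc h.symm
    rw [mul_sub, mul_one, sub_eq_zero] at h1 h2
    exact (h1.trans ((hec f).trans h2.symm))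
  · rintro f ⟨hf, hne, hfc, hp⟩
    obtain ⟨e, he, rfl⟩ := hl f hf
    refine ⟨e, ⟨he, fun h => hne (by rw [h, map_zero]), hcl e he hfc, ?_⟩, rfl⟩
    intro x y hxc hyc hx hy hxy hadd
    rcases hp (φ x) (φ y) (hcm x hxc) (hcm y hyc) (hx.map φ) (hy.map φ)
      (by rw [← map_mul, hxy, map_zero]) (by rw [← map_add, hadd]) with h | h
    · exact Or.inl (hz x hx h)
    · exact Or.inr (hz y hy h)

lemma semiperfect_of (hs : Function.Surjective φ) (hk : ∀ x, φ x = 0 → IsUnit (1 + x))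
    (hl : ∀ f : C, IsIdempotentElem f → ∃ e, IsIdempotentElem e ∧ φ e = f)
    [IsArtinianRing C] : IsSemiperfect A := by
  have hker : RingHom.ker φ ≤ Ring.jacobson A := by
    rw [← Ideal.jacobson_bot]
    intro x hx
    rw [Ideal.mem_jacobson_iff]
    intro y
    obtain ⟨u, hu⟩ := hk (y * x) (by rw [map_mul, (RingHom.mem_ker).1 hx, mul_zero])
    refine ⟨(↑u⁻¹ : A), ?_⟩
    have : (↑u⁻¹ : A) * y * x + ↑u⁻¹ = ↑u⁻¹ * (1 + y * x) := by noncomm_ring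
    rw [this, ← hu, Units.inv_mul, sub_self]; exact Submodule.zero_mem _
  let q := RingCon.mk' (⊥ : TwoSidedIdeal A).jacobson.ringCon
  have hq : Function.Surjective q := RingCon.mk'_surjective _
  have hqk : ∀ x, q x = 0 ↔ x ∈ Ring.jacobson A := by
    intro x
    rw [← Ideal.jacobson_bot]
    have h1 : x ∈ (⊥ : TwoSidedIdeal A).jacobson ↔ x ∈ Ideal.jacobson (⊥ : Ideal A) := by
      rw [TwoSidedIdeal.mem_jacobson_iff, Ideal.mem_jacobson_iff]
      simp
    rw [← h1, TwoSidedIdeal.mem_iff]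
    exact RingCon.eq _
  have hqker : RingHom.ker q = Ring.jacobson A := by
    ext x; rw [RingHom.mem_ker]; exact hqk x
  constructor
  · have : IsArtinianRing (A ⧸ RingHom.ker φ) :=
      (RingHom.quotientKerEquivOfSurjective hs).symm.surjective.isArtinianRing
    have : IsArtinianRing (A ⧸ Ring.jacobson A) :=
      (Ideal.Quotient.factor_surjective hker).isArtinianRing
    have : IsSemisimpleRing (A ⧸ Ring.jacobson A) :=
      IsArtinianRing.isSemisimpleRing_iff_jacobson.mpr (Ring.jacobson_quotient_jacobson A)
    let g := Ideal.Quotient.lift (Ring.jacobson A) q (fun x hx => (hqk x).2 hx)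
    have hg : Function.Surjective g := Ideal.Quotient.lift_surjective_of_surjective _ _ hq
    exact RingHom.isSemisimpleRing_of_surjective g hg
  · intro f hf
    obtain ⟨a, rfl⟩ := hq f
    have ha : a - a ^ 2 ∈ Ring.jacobson A := by
      rw [← hqk, map_sub, map_pow, pow_two, hf.eq, sub_self]
    have hc : φ (a - a ^ 2) ∈ Ring.jacobson C := by
      have : RingHomSurjective φ := ⟨hs⟩
      exact Ring.map_jacobson_le φ (Submodule.mem_map_of_mem (f := φ.toSemilinearMap) ha)
    obtain ⟨N, hN⟩ := IsArtinianRing.isNilpotent_jacobson_bot (R := C)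
    rw [Ideal.jacobson_bot] at hN
    have hn : (φ a - φ a ^ 2) ^ (N + 1) = 0 := by
      have h1 := Ideal.pow_mem_pow hc N
      rw [hN] at h1
      rw [map_sub, map_pow] at h1
      rw [pow_succ, (Ideal.mem_bot.1 h1 : (φ a - φ a ^ 2) ^ N = 0), zero_mul]
    have hi := isIdempotentElem_one_sub_one_sub_pow_pow _ _ hn
    obtain ⟨e, he, h⟩ := hl _ hi
    refine ⟨e, he, ?_⟩
    have h2 : φ (e - (1 - (1 - a ^ (N + 1)) ^ (N + 1))) = 0 := by
      rw [map_sub, h]; simp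
    have h3 := (hqk _).2 (hker (RingHom.mem_ker.2 h2))
    rw [map_sub, sub_eq_zero] at h3
    change q e = q a
    rw [h3]
    simp only [map_sub, map_one, map_pow, hf.pow_succ_eq, hf.one_sub.pow_succ_eq, sub_sub_cancel]

end Helpers

section Core

lemma wedder (K : Type u) (B : Type u) [Field K] [Ring B] [Algebra K B] [Module.Finite K B]
    (h : IsSplitAlgebra K B) :
    ∃ (n : ℕ) (d : Fin n → ℕ) (Ψ : B →ₐ[K] ((i : Fin n) → Matrix (Fin (d i)) (Fin (d i)) K)),
      Function.Surjective Ψ ∧ ∀ x, Ψ x = 0 → IsNilpotent x := by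
  have : IsArtinianRing B := IsArtinianRing.of_finite K B
  let Q := B ⧸ Ring.jacobson B
  have : IsSemisimpleRing Q :=
    IsArtinianRing.isSemisimpleRing_iff_jacobson.mpr (Ring.jacobson_quotient_jacobson B)
  obtain ⟨n, S, d, hS, hd, ⟨e⟩⟩ :=
    IsSemisimpleRing.exists_algEquiv_pi_matrix_end_mulOpposite K Q
  have hbij : ∀ i, Function.Bijective (Algebra.ofId K (Module.End Q (S i))ᵐᵒᵖ) := by
    intro i
    have := hS i
    have : Nontrivial (S i) := IsSimpleModule.nontrivial Q (S i)
    constructor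
    · exact (algebraMap K (Module.End Q (S i))ᵐᵒᵖ).injective
    · intro f
      let q : B →+* Q := Ideal.Quotient.mk (Ring.jacobson B)
      have : RingHomSurjective q := ⟨Ideal.Quotient.mk_surjective⟩
      letI : Module B (S i) := Module.compHom (S i) q
      let g : (S i) →ₛₗ[q] (S i) := { toFun := id, map_add' := fun _ _ => rfl, map_smul' := fun _ _ => rfl }
      have hsimple : IsSimpleModule B (S i) :=
        (LinearMap.isSimpleModule_iff_of_bijective g Function.bijective_id).2 (hS i)
      obtain ⟨k, hk⟩ := h (S i) hsimple
        { toFun := f.unop, map_add' := fun x y => map_add _ _ _,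
          map_smul' := fun b x => (f.unop).map_smul (q b) x }
      refine ⟨k, ?_⟩
      apply MulOpposite.unop_injective
      ext1 s
      have h1 : f.unop s = algebraMap K B k • s := hk s
      rw [h1]
      change (algebraMap K (Module.End Q (S i)) k) s = algebraMap K Q k • s
      rw [Module.algebraMap_end_apply, algebraMap_smul]
  let e2 : Q ≃ₐ[K] ((i : Fin n) → Matrix (Fin (d i)) (Fin (d i)) K) :=
    e.trans (AlgEquiv.piCongrRight fun i => (AlgEquiv.ofBijective _ (hbij i)).symm.mapMatrix)
  refine ⟨n, d, (e2 : Q →ₐ[K] _).comp (Ideal.Quotient.mkₐ K (Ring.jacobson B)), ?_, ?_⟩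
  · exact e2.surjective.comp Ideal.Quotient.mk_surjective
  · intro x hx
    have h1 : Ideal.Quotient.mk (Ring.jacobson B) x = 0 := e2.injective (hx.trans (map_zero e2).symm)
    rw [Ideal.Quotient.eq_zero_iff_mem] at h1
    obtain ⟨N, hN⟩ := IsArtinianRing.isNilpotent_jacobson_bot (R := B)
    rw [Ideal.jacobson_bot] at hN
    have h2 := Ideal.pow_mem_pow h1 N
    rw [hN] at h2
    exact ⟨N, Ideal.mem_bot.1 h2⟩

variable {R : Type u} [CommRing R]

lemma unit_one_add [IsLocalRing R] {A : Type*} [Ring A] [Algebra R A] [Module.Finite R A]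
    {p : R} (hp : p ∈ IsLocalRing.maximalIdeal R) (x : A) : IsUnit (1 + p • x) := by
  have key : ∀ x : A, ∃ y, (1 + p • x) * y = 1 := by
    intro x
    let N : Submodule R A := LinearMap.range (LinearMap.mulLeft R (1 + p • x))
    have hN : (⊤ : Submodule R A) ≤ N := by
      apply Submodule.le_of_le_smul_of_le_jacobson_bot (I := IsLocalRing.maximalIdeal R)
        Module.Finite.fg_top (IsLocalRing.maximalIdeal_le_jacobson _)
      intro y _
      have : y = (1 + p • x) * y + p • (-(x * y)) := by
        rw [add_mul, smul_mul_assoc, smul_neg]; simp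
      rw [this]
      exact Submodule.add_mem_sup ⟨y, rfl⟩ (Submodule.smul_mem_smul hp trivial)
    obtain ⟨y, hy⟩ := hN (show (1 : A) ∈ ⊤ from trivial)
    exact ⟨y, hy⟩
  obtain ⟨y, hy⟩ := key x
  have hy2 : y = 1 + p • (-(x * y)) := by
    rw [smul_neg, ← smul_mul_assoc, eq_add_neg_iff_add_eq, ← hy, add_mul, one_mul]
  obtain ⟨z, hz⟩ := key (-(x * y))
  rw [← hy2] at hz
  have : z = 1 + p • x := by
    calc z = (1 + p • x) * y * z := by rw [hy, one_mul]
      _ = _ := by rw [mul_assoc, hz, mul_one]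
  rw [this] at hz
  exact ⟨⟨_, y, hy, hz⟩, rfl⟩

lemma end_lift [IsLocalRing R] {L : Type*} [AddCommGroup L] [Module R L] [Module.Finite R L]
    [Module.Free R L] (r : R) (a y : Module.End R L) (h : a * a - a = r • y) :
    ∃ e : Module.End R L, IsIdempotentElem e ∧ ∃ z, e - a = r • z := by
  have : Module.FinitePresentation R L := Module.finitePresentation_of_projective R L
  obtain ⟨κ, s, b, hb⟩ := Module.exists_basis_of_span_of_flat (R := R)
    (Sum.elim (fun l : L => a l) (fun l : L => l - a l)) (by
      rw [eq_top_iff]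
      intro l _
      have : l = a l + (l - a l) := by abel
      rw [this]
      exact Submodule.add_mem _ (Submodule.subset_span ⟨Sum.inl l, rfl⟩)
        (Submodule.subset_span ⟨Sum.inr l, rfl⟩))
  have hy : ∀ l, a (a l) - a l = r • y l := fun l => LinearMap.congr_fun h l
  refine ⟨b.constr R (fun k => Sum.elim (fun _ => b k) (fun _ => 0) (s k)), ?_,
    b.constr R (fun k => Sum.elim (fun l => - y l) (fun l => y l) (s k)), ?_⟩
  · apply b.ext
    intro k
    rw [Module.End.mul_apply, b.constr_basis]
    rcases hk : s k with l | l
    · simp [hk]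
    · simp
  · apply b.ext
    intro k
    rw [LinearMap.sub_apply, LinearMap.smul_apply, b.constr_basis, b.constr_basis, hb]
    rcases hk : s k with l | l
    · simp only [Sum.elim_inl, smul_neg, ← hy]; abel
    · simp only [Sum.elim_inr, ← hy, map_sub]; abel

lemma newton {A : Type*} [Ring A] [Algebra R A] (p : R) (a y : A) (h : a * a - a = p • y) (n : ℕ) :
    ∃ b z w : A, b - a = p • z ∧ b * b - b = p ^ (n + 1) • w := by
  induction n with
  | zero => exact ⟨a, 0, y, by simp, by simpa using h⟩
  | succ n ih =>
    obtain ⟨b, z, w, h1, h2⟩ := ih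
    refine ⟨3 * b * b - 2 * b * b * b, z - (2 * b - 1) * (p ^ n • w),
      (4 * b * b - 4 * b - 3) * (p ^ n • (w * w)), ?_, ?_⟩
    · have : 3 * b * b - 2 * b * b * b - a = (b - a) - (2 * b - 1) * (b * b - b) := by noncomm_ring
      rw [this, h1, h2, smul_sub, ← mul_smul_comm, smul_smul, pow_succ' p n]
    · have : (3 * b * b - 2 * b * b * b) * (3 * b * b - 2 * b * b * b) - (3 * b * b - 2 * b * b * b)
        = (4 * b * b - 4 * b - 3) * ((b * b - b) * (b * b - b)) := by noncomm_ring
      rw [this, h2, ← mul_smul_comm, smul_smul, smul_mul_smul_comm, ← pow_add, ← pow_add]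
      congr 3
      omega

/-- lifting along a comparison with a nice order -/
lemma lift_of_order [IsLocalRing R] {A Λ : Type*} [Ring A] [Algebra R A] [Module.Finite R A]
    [Ring Λ] [Algebra R Λ] (ψ : A →ₐ[R] Λ) {p : R} (hp : p ∈ IsLocalRing.maximalIdeal R)
    (hnil : ∀ x, ψ x = 0 → IsNilpotent x) (c : ℕ) (hc : ∀ l : Λ, ∃ x, ψ x = p ^ c • l)
    (hΛ : ∀ (r : R) (a y : Λ), a * a - a = r • y → ∃ e, IsIdempotentElem e ∧ ∃ z, e - a = r • z)
    {C : Type*} [Ring C] (φ : A →+* C) (hφ : ∀ x, φ x = 0 ↔ ∃ y, x = p • y)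
    (a : A) (ha : IsIdempotentElem (φ a)) : ∃ e : A, IsIdempotentElem e ∧ φ e = φ a := by
  obtain ⟨y, hy⟩ := (hφ (a * a - a)).1 (by rw [map_sub, map_mul, ha.eq, sub_self])
  obtain ⟨b, z, w, h1, h2⟩ := newton p a y hy c
  obtain ⟨l, hl, z', hz'⟩ := hΛ (p ^ (c + 1)) (ψ b) (ψ w) (by rw [← map_mul, ← map_sub, h2, map_smul])
  obtain ⟨x, hx⟩ := hc z'
  have hl2 : ψ (b + p • x) = l := by
    rw [map_add, map_smul, hx, smul_smul, ← pow_succ', ← hz']; abel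
  obtain ⟨e, he, hel⟩ := exists_isIdempotentElem_eq_of_ker_isNilpotent (ψ : A →+* Λ)
    (fun x hx => hnil x hx) l ⟨_, hl2⟩ hl
  have hk : ψ (b + p • x - e) = 0 := by
    rw [map_sub, hl2]; exact sub_eq_zero.2 hel.symm
  refine conj_lift φ he ha ?_
  have hae : a - e = (b + p • x - e) - p • (z + x) := by
    rw [smul_add, ← h1]; abel
  obtain ⟨k, hkdef⟩ : ∃ k, k = (2 * e - 1) * (b + p • x - e) := ⟨_, rfl⟩
  have hku : IsUnit (1 + k) := (hnil k (by rw [hkdef, map_mul, hk, mul_zero])).isUnit_one_add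
  obtain ⟨u, hu⟩ := hku
  have : 1 + (2 * e - 1) * (a - e) = u * (1 + p • (↑u⁻¹ * (-((2 * e - 1) * (z + x))))) := by
    rw [mul_add, mul_smul_comm, Units.mul_inv_cancel_left, hu, hae, mul_sub, ← hkdef, mul_smul_comm,
      smul_neg]
    simp; abel
  rw [this]
  exact u.isUnit.mul (unit_one_add hp _)

end Core

section Lattice

variable {R : Type u} [CommRing R] {K : Type u} [Field K] [Algebra R K]

lemma exists_lattice {A : Type*} [Ring A] [Algebra R A] [Module.Finite R A] {n : ℕ}
    (ρ : A →ₐ[R] Matrix (Fin n) (Fin n) K) :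
    ∃ L : Submodule R (Fin n → K), Module.Finite R L ∧
      (∀ a, ∀ v ∈ L, (ρ a).mulVec v ∈ L) ∧ ∀ j, Pi.single j (1 : K) ∈ L := by
  let T : (Fin n → A) →ₗ[R] (Fin n → K) :=
    { toFun := fun x => ∑ j, (ρ (x j)).mulVec (Pi.single j 1)
      map_add' := fun x y => by
        simp only [Pi.add_apply, map_add, Matrix.add_mulVec, Finset.sum_add_distrib]
      map_smul' := fun r x => by
        simp only [Pi.smul_apply, map_smul, Matrix.smul_mulVec, Finset.smul_sum,
          RingHom.id_apply] }
  have hT : ∀ x, T x = ∑ j, (ρ (x j)).mulVec (Pi.single j 1) := fun _ => rfl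
  refine ⟨LinearMap.range T, inferInstance, ?_, ?_⟩
  · rintro a _ ⟨x, rfl⟩
    refine ⟨fun j => a * x j, ?_⟩
    rw [hT, hT, Matrix.mulVec_sum]
    simp only [map_mul, Matrix.mulVec_mulVec]
  · intro j
    refine ⟨Pi.single j 1, ?_⟩
    rw [hT, Finset.sum_eq_single j]
    · rw [Pi.single_eq_same, map_one, Matrix.one_mulVec]
    · intro i _ hi
      rw [Pi.single_eq_of_ne hi, map_zero, Matrix.zero_mulVec]
    · simp

lemma exists_matrix [IsDomain R] [IsPrincipalIdealRing R] [IsFractionRing R K] {n : ℕ}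
    (L : Submodule R (Fin n → K)) [Module.Free R L] (f : Module.End R L) :
    ∃ M : Matrix (Fin n) (Fin n) K, ∀ v : L, M.mulVec v = f v := by
  let b := Module.Free.chooseBasis R L
  have h1 : LinearIndependent R (fun i => (b i : Fin n → K)) :=
    b.linearIndependent.map' L.subtype L.ker_subtype
  have h2 : LinearIndependent K (fun i => (b i : Fin n → K)) :=
    (LinearIndependent.iff_fractionRing R K).1 h1
  let B := Module.Basis.span h2
  obtain ⟨g, hg⟩ := LinearMap.exists_extend (B.constr K (fun i => (f (b i) : Fin n → K)))
  have hgb : ∀ i, g (b i) = f (b i) := by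
    intro i
    have h3 := LinearMap.congr_fun hg (B i)
    rw [B.constr_basis] at h3
    rw [← h3, LinearMap.comp_apply, Submodule.subtype_apply, Module.Basis.span_apply]
  refine ⟨LinearMap.toMatrix' g, fun v => ?_⟩
  rw [LinearMap.toMatrix'_mulVec]
  have h4 : (g.restrictScalars R).comp L.subtype = L.subtype.comp f := by
    apply b.ext
    intro i
    exact hgb i
  exact LinearMap.congr_fun h4 v

def latticeHom {A : Type*} [Ring A] [Algebra R A] {n : ℕ}
    (ρ : A →ₐ[R] Matrix (Fin n) (Fin n) K) (L : Submodule R (Fin n → K))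
    (hL : ∀ a, ∀ v ∈ L, (ρ a).mulVec v ∈ L) : A →ₐ[R] Module.End R L :=
  AlgHom.ofLinearMap
    { toFun := fun a =>
        { toFun := fun v => ⟨(ρ a).mulVec v, hL a v v.2⟩
          map_add' := fun x y => Subtype.ext (by simp [Matrix.mulVec_add])
          map_smul' := fun r x => Subtype.ext (by simp [Matrix.mulVec_smul]) }
      map_add' := fun x y => by
        ext1 v; exact Subtype.ext (by simp [Matrix.add_mulVec])
      map_smul' := fun r x => by
        ext1 v; exact Subtype.ext (by simp [Matrix.smul_mulVec]) }
    (by ext1 v; exact Subtype.ext (by simp))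
    (fun x y => by ext1 v; exact Subtype.ext (by simp))

lemma latticeHom_apply {A : Type*} [Ring A] [Algebra R A] {n : ℕ}
    (ρ : A →ₐ[R] Matrix (Fin n) (Fin n) K) (L : Submodule R (Fin n → K))
    (hL : ∀ a, ∀ v ∈ L, (ρ a).mulVec v ∈ L) (a : A) (v : L) :
    (latticeHom ρ L hL a v : Fin n → K) = (ρ a).mulVec v := rfl

end Lattice

lemma unif_order {R : Type*} [CommRing R] [IsDomain R] [IsDiscreteValuationRing R]
    {A Λ : Type*} [Ring A] [Algebra R A] [Ring Λ] [Algebra R Λ] [Module.Finite R Λ]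
    (ψ : A →ₐ[R] Λ) {p : R} (hp : Irreducible p)
    (hsurj : ∀ l : Λ, ∃ s : nonZeroDivisors R, ∃ x, ψ x = (s : R) • l) :
    ∃ c : ℕ, ∀ l : Λ, ∃ x, ψ x = p ^ c • l := by
  let N : Submodule R Λ := LinearMap.range ψ.toLinearMap
  have htors : Module.IsTorsion R (Λ ⧸ N) := by
    intro z
    obtain ⟨l, rfl⟩ := Submodule.Quotient.mk_surjective _ z
    obtain ⟨s, x, hx⟩ := hsurj l
    refine ⟨s, ?_⟩
    change (s : R) • (Submodule.Quotient.mk l : Λ ⧸ N) = 0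
    rw [← Submodule.Quotient.mk_smul, Submodule.Quotient.mk_eq_zero]
    exact ⟨x, hx⟩
  obtain ⟨s, hs1, hs2⟩ := Submodule.annihilator_top_inter_nonZeroDivisors htors
  obtain ⟨c, u, hc⟩ := IsDiscreteValuationRing.associated_pow_irreducible
    (nonZeroDivisors.ne_zero hs2) hp
  refine ⟨c, fun l => ?_⟩
  have h1 := Submodule.mem_annihilator.1 hs1 (Submodule.Quotient.mk l) trivial
  rw [← Submodule.Quotient.mk_smul, Submodule.Quotient.mk_eq_zero] at h1
  obtain ⟨x, hx⟩ := h1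
  refine ⟨(u : R) • x, ?_⟩
  have hx' : ψ x = s • l := hx
  rw [map_smul, hx', smul_smul, ← hc, mul_comm]

lemma idem_lift_main (R : Type u) [CommRing R] [IsDomain R] [IsDiscreteValuationRing R]
    (A : Type u) [Ring A] [Algebra R A] [Module.Finite R A] [Module.Flat R A]
    (hsplit : IsSplitAlgebra (FractionRing R) (FractionRing R ⊗[R] A))
    {p : R} (hp : Irreducible p)
    {C : Type*} [Ring C] (φ : A →+* C) (hφ : ∀ x, φ x = 0 ↔ ∃ y, x = p • y)
    (a : A) (ha : IsIdempotentElem (φ a)) : ∃ e : A, IsIdempotentElem e ∧ φ e = φ a := by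
  obtain ⟨n, d, Ψ, hΨs, hΨn⟩ := wedder (FractionRing R) (FractionRing R ⊗[R] A) hsplit
  let inc : A →ₐ[R] FractionRing R ⊗[R] A := Algebra.TensorProduct.includeRight
  have hinc : Function.Injective inc :=
    Algebra.TensorProduct.includeRight_injective (IsFractionRing.injective R (FractionRing R))
  let ρ : ∀ i, A →ₐ[R] Matrix (Fin (d i)) (Fin (d i)) (FractionRing R) := fun i =>
    ((Pi.evalAlgHom R _ i).comp (Ψ.restrictScalars R)).comp inc
  have hρ : ∀ i x, ρ i x = Ψ (inc x) i := fun _ _ => rfl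
  choose L hfin hL hone using fun i => exists_lattice (ρ i)
  have hfree : ∀ i, Module.Free R (L i) := fun i => inferInstance
  let ψ : A →ₐ[R] ((i : Fin n) → Module.End R (L i)) :=
    AlgHom.pi fun i => latticeHom (ρ i) (L i) (hL i)
  have hψ : ∀ x i (v : L i), ((ψ x i) v : Fin (d i) → FractionRing R) = (ρ i x).mulVec v :=
    fun _ _ _ => rfl
  have hsurj : ∀ l : ((i : Fin n) → Module.End R (L i)), ∃ s : nonZeroDivisors R, ∃ x,
      ψ x = (s : R) • l := by
    intro l
    choose M hM using fun i => exists_matrix (K := FractionRing R) (L i) (l i)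
    obtain ⟨y, hy⟩ := hΨs M
    obtain ⟨⟨x, s⟩, hs⟩ := IsLocalizedModule.surj (nonZeroDivisors R)
      (TensorProduct.mk R (FractionRing R) A 1) y
    refine ⟨s, x, ?_⟩
    have hs' : (s : R) • y = inc x := hs
    ext i v : 3
    rw [hψ, hρ, ← hs']
    have hsm : Ψ ((s : R) • y) = (s : R) • Ψ y := map_smul (Ψ.restrictScalars R) (s : R) y
    rw [hsm, hy, Pi.smul_apply, Matrix.smul_mulVec, hM]
    rfl
  have hE : ∀ i, Module.Finite R (Module.End R (L i)) := fun i =>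
    Module.Finite.linearMap R R (L i) (L i)
  have hE2 : Module.Finite R ((i : Fin n) → Module.End R (L i)) := Module.Finite.pi
  obtain ⟨c, hc⟩ := unif_order (Λ := (i : Fin n) → Module.End R (L i)) ψ hp hsurj
  refine lift_of_order (Λ := (i : Fin n) → Module.End R (L i)) ψ (p := p) ?_ ?_ c hc ?_ φ hφ a ha
  · rw [hp.maximalIdeal_eq]; exact Ideal.mem_span_singleton_self p
  · intro x hx
    have h0 : Ψ (inc x) = 0 := by
      ext i : 1
      rw [← hρ, Pi.zero_apply]
      ext j k
      have := hψ x i ⟨_, hone i k⟩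
      rw [hx] at this
      have h2 := congrFun this j
      simpa using h2.symm
    obtain ⟨N, hN⟩ := hΨn _ h0
    exact ⟨N, hinc (by rw [map_pow, hN, map_zero])⟩
  · intro r a y h
    choose e he z hz using fun i => end_lift r (a i) (y i) (congrFun h i)
    exact ⟨e, funext he, z, funext hz⟩

/-- **Corollary `algebra_dvr_semiperfect`.** A finite flat algebra `A` over a discrete valuation
ring `R` with split generic fiber is semiperfect; in particular the quotient map
`A → A/mA = κ ⊗[R] A` is idempotent surjective, induces a bijection of isomorphism classes of
primitive idempotents, and is block bijective. -/
theorem stmt18 (R : Type u) [CommRing R] [IsDomain R] [IsDiscreteValuationRing R]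
    (A : Type u) [Ring A] [Algebra R A] [Module.Finite R A] [Module.Flat R A]
    (hsplit : IsSplitAlgebra (FractionRing R) (FractionRing R ⊗[R] A)) :
    IsSemiperfect A ∧
    (∀ f : (R ⧸ IsLocalRing.maximalIdeal R) ⊗[R] A, IsIdempotentElem f →
      ∃ e : A, IsIdempotentElem e ∧
        (Algebra.TensorProduct.includeRight e :
          (R ⧸ IsLocalRing.maximalIdeal R) ⊗[R] A) = f) ∧
    PrimIdemBijective (fun a : A => (Algebra.TensorProduct.includeRight a :
      (R ⧸ IsLocalRing.maximalIdeal R) ⊗[R] A)) ∧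
    BlockBijective (fun a : A => (Algebra.TensorProduct.includeRight a :
      (R ⧸ IsLocalRing.maximalIdeal R) ⊗[R] A)) := by

  obtain ⟨p, hp⟩ := IsDiscreteValuationRing.exists_irreducible R
  have hpm : p ∈ IsLocalRing.maximalIdeal R := by
    rw [hp.maximalIdeal_eq]; exact Ideal.mem_span_singleton_self p
  let φ : A →+* (R ⧸ IsLocalRing.maximalIdeal R) ⊗[R] A :=
    (Algebra.TensorProduct.includeRight : A →ₐ[R] (R ⧸ IsLocalRing.maximalIdeal R) ⊗[R] A)
  have hφ0 : ∀ x, φ x = 1 ⊗ₜ x := fun _ => rfl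
  have hs : Function.Surjective φ :=
    TensorProduct.mk_surjective R A _ Ideal.Quotient.mk_surjective
  have hφ : ∀ x, φ x = 0 ↔ ∃ y, x = p • y := by
    intro x
    rw [hφ0, ← (TensorProduct.quotTensorEquivQuotSMul A (IsLocalRing.maximalIdeal R)).map_eq_zero_iff,
      TensorProduct.quotTensorEquivQuotSMul_mk_one_tmul, Submodule.Quotient.mk_eq_zero,
      hp.maximalIdeal_eq, Submodule.ideal_span_singleton_smul, Submodule.mem_smul_pointwise_iff_exists]
    exact ⟨fun ⟨y, _, h⟩ => ⟨y, h.symm⟩, fun ⟨y, h⟩ => ⟨y, trivial, h.symm⟩⟩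
  have hk : ∀ x, φ x = 0 → IsUnit (1 + x) := by
    intro x hx
    obtain ⟨y, rfl⟩ := (hφ x).1 hx
    exact unit_one_add hpm y
  have hl : ∀ f, IsIdempotentElem f → ∃ e, IsIdempotentElem e ∧ φ e = f := by
    intro f hf
    obtain ⟨a, rfl⟩ := hs f
    exact idem_lift_main R A hsplit hp φ hφ a hf
  have hnak : ∀ e f : A, IsIdempotentElem e → IsIdempotentElem f →
      (∀ x, φ (e * x * f) = 0) → ∀ x, e * x * f = 0 := by
    intro e f he hf h x
    let T : A →ₗ[R] A := (LinearMap.mulRight R f).comp (LinearMap.mulLeft R e)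
    have hT : ∀ x, T x = e * x * f := fun _ => rfl
    have hb : LinearMap.range T = ⊥ := by
      apply Submodule.eq_bot_of_le_smul_of_le_jacobson_bot (IsLocalRing.maximalIdeal R) _
        (Module.Finite.fg_top.map T |> fun h => by rwa [← LinearMap.range_eq_map] at h) ?_
        (IsLocalRing.maximalIdeal_le_jacobson _)
      rintro _ ⟨x, rfl⟩
      obtain ⟨y, hy⟩ := (hφ _).1 (h x)
      have : T x = p • T y := by
        rw [← map_smul, ← hy, hT, hT, ← mul_assoc, ← mul_assoc, he.eq, mul_assoc _ f, hf.eq]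
      rw [this]
      exact Submodule.smul_mem_smul hpm ⟨y, rfl⟩
    have h1 : T x ∈ LinearMap.range T := ⟨x, rfl⟩
    rw [hb] at h1
    exact h1
  let _ : Field (R ⧸ IsLocalRing.maximalIdeal R) := Ideal.Quotient.field _
  have : IsArtinianRing ((R ⧸ IsLocalRing.maximalIdeal R) ⊗[R] A) :=
    IsArtinianRing.of_finite (R ⧸ IsLocalRing.maximalIdeal R) _
  exact ⟨semiperfect_of φ hs hk hl, hl, prim_bij φ hs hk hl, block_bij φ hs hk hl hnak⟩
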